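/- arXiv:2206.02491 — 2 statements merged into one kernel-verified Lean document; each statement's English description precedes it below -/
import Mathlib

section
/- Let R : ℝ → ℝ be twice differentiable and Re > 0. Define the velocity field u(x,t) = R'(t) R(t)² · x/‖x‖³ and the pressure p(x,t) = R(t) ( R''(t) R(t) + 2 R'(t)² ) / ‖x‖ for x ∈ ℝ³ ∖ {0}. Then for every x ≠ 0 and every t, the pair (u,p) satisfies the unsteady incompressible Stokes equations: ∂u/∂t (x,t) + ∇_x p(x,t) = (1/Re) Δ_x u(x,t) and div_x u(x,t) = 0, where in fact Δ_x u(x,t) = 0. -/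
/-- Exact velocity field of the pulsating bubble with radius law `R(t)`:
`u(t,x) = R'(t) R(t)² · x/‖x‖³`. -/
noncomputable def pulsatingVel (R : ℝ → ℝ) (t : ℝ)
    (x : EuclideanSpace ℝ (Fin 3)) : EuclideanSpace ℝ (Fin 3) :=
  (deriv R t * (R t) ^ 2 / ‖x‖ ^ 3) • x

/-- Exact pressure field of the pulsating bubble:
`p(t,x) = R(t)(R''(t)R(t) + 2R'(t)²)/‖x‖`. -/
noncomputable def pulsatingPres (R : ℝ → ℝ) (t : ℝ)
    (x : EuclideanSpace ℝ (Fin 3)) : ℝ :=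
  R t * (deriv (deriv R) t * R t + 2 * (deriv R t) ^ 2) / ‖x‖

lemma pb_norm (y : EuclideanSpace ℝ (Fin 3)) (hy : y ≠ 0) (k : ℕ) :
    HasFDerivAt (fun z : EuclideanSpace ℝ (Fin 3) => (‖z‖ ^ k)⁻¹)
      ((-(k : ℝ) * (‖y‖ ^ (k + 2))⁻¹) • innerSL ℝ y) y := by
  have hn : ‖y‖ ≠ 0 := norm_ne_zero_iff.mpr hy
  have h1 := (hasStrictFDerivAt_norm_sq y).hasFDerivAt.sqrt (by positivity)
  have h2 : HasFDerivAt (fun z : EuclideanSpace ℝ (Fin 3) => ‖z‖) (‖y‖⁻¹ • innerSL ℝ y) y := by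
    simp only [Real.sqrt_sq (norm_nonneg _)] at h1
    refine h1.congr_fderiv ?_
    ext v
    simp
    try field_simp
  have h3 : HasDerivAt (fun r : ℝ => (r ^ k)⁻¹) (-(k : ℝ) * (‖y‖ ^ (k + 1))⁻¹) ‖y‖ := by
    have := (hasDerivAt_pow k ‖y‖).inv (pow_ne_zero k hn)
    refine this.congr_deriv ?_
    rcases k with _ | k
    · simp
    · simp only [Nat.add_sub_cancel]
      field_simp
      ring
  have h4 := h3.comp_hasFDerivAt y h2
  refine h4.congr_fderiv ?_
  rw [smul_smul]
  congr 1
  field_simp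
  ring

lemma pb_coord (y : EuclideanSpace ℝ (Fin 3)) (i : Fin 3) :
    HasFDerivAt (fun z : EuclideanSpace ℝ (Fin 3) => z i)
      (EuclideanSpace.proj i : EuclideanSpace ℝ (Fin 3) →L[ℝ] ℝ) y :=
  (EuclideanSpace.proj i : EuclideanSpace ℝ (Fin 3) →L[ℝ] ℝ).hasFDerivAt

lemma pb_vel (R : ℝ → ℝ) (t : ℝ) (y : EuclideanSpace ℝ (Fin 3)) (hy : y ≠ 0) (i j : Fin 3) :
    fderiv ℝ (fun z => pulsatingVel R t z i) y (EuclideanSpace.single j 1) =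
      (deriv R t * (R t) ^ 2) * ((if i = j then 1 else 0) * (‖y‖ ^ 3)⁻¹
        + (-3) * (y i * y j * (‖y‖ ^ 5)⁻¹)) := by
  have h := ((pb_norm y hy 3).mul (pb_coord y i)).const_mul (deriv R t * (R t) ^ 2)
  have e : (fun z => pulsatingVel R t z i) = fun z : EuclideanSpace ℝ (Fin 3) =>
      deriv R t * (R t) ^ 2 * ((‖z‖ ^ 3)⁻¹ * z i) := by
    funext z
    simp [pulsatingVel]
    ring
  rw [e]
  erw [h.fderiv]
  simp [EuclideanSpace.inner_single_right, Pi.single_apply]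
  ring_nf
  simp

lemma pb_lap (R : ℝ → ℝ) (t : ℝ) (y : EuclideanSpace ℝ (Fin 3)) (hy : y ≠ 0) (i j : Fin 3) :
    fderiv ℝ (fun y => fderiv ℝ (fun z => pulsatingVel R t z i) y
          (EuclideanSpace.single j 1)) y (EuclideanSpace.single j 1) =
      (deriv R t * (R t) ^ 2) * ((if i = j then 1 else 0) * (-6 * y j * (‖y‖ ^ 5)⁻¹)
        - 3 * y i * (‖y‖ ^ 5)⁻¹ + 15 * (y i * y j ^ 2 * (‖y‖ ^ 7)⁻¹)) := by
  have e : (fun y => fderiv ℝ (fun z => pulsatingVel R t z i) y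
      (EuclideanSpace.single j 1)) =ᶠ[nhds y] fun y : EuclideanSpace ℝ (Fin 3) =>
      (deriv R t * (R t) ^ 2) * ((if i = j then 1 else 0) * (‖y‖ ^ 3)⁻¹
        + (-3) * (y i * y j * (‖y‖ ^ 5)⁻¹)) := by
    filter_upwards [isOpen_ne.mem_nhds hy] with z hz
    exact pb_vel R t z hz i j
  rw [e.fderiv_eq]
  have h := (((pb_norm y hy 3).const_mul (if i = j then 1 else 0)).add
    ((((pb_coord y i).mul (pb_coord y j)).mul (pb_norm y hy 5)).const_mul (-3))).const_mul
      (deriv R t * (R t) ^ 2)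
  erw [h.fderiv]
  by_cases hij : i = j
  · subst hij
    simp [EuclideanSpace.inner_single_right, Pi.single_apply]
    ring
  · simp [EuclideanSpace.inner_single_right, Pi.single_apply, hij]
    ring

lemma pb_pres (R : ℝ → ℝ) (t : ℝ) (y : EuclideanSpace ℝ (Fin 3)) (hy : y ≠ 0) (i : Fin 3) :
    fderiv ℝ (fun z => pulsatingPres R t z) y (EuclideanSpace.single i 1) =
      -(R t * (deriv (deriv R) t * R t + 2 * (deriv R t) ^ 2)) * (y i * (‖y‖ ^ 3)⁻¹) := by
  have h := (pb_norm y hy 1).const_mul (R t * (deriv (deriv R) t * R t + 2 * (deriv R t) ^ 2))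
  have e : (fun z => pulsatingPres R t z) = fun z : EuclideanSpace ℝ (Fin 3) =>
      (R t * (deriv (deriv R) t * R t + 2 * (deriv R t) ^ 2)) * (‖z‖ ^ 1)⁻¹ := by
    funext z
    simp [pulsatingPres, div_eq_mul_inv]
  rw [e, h.fderiv]
  simp [EuclideanSpace.inner_single_right]
  ring_nf
  simp

lemma pb_time (R : ℝ → ℝ) (hR : Differentiable ℝ R) (hR' : Differentiable ℝ (deriv R))
    (t : ℝ) (y : EuclideanSpace ℝ (Fin 3)) (i : Fin 3) :
    deriv (fun s => pulsatingVel R s y i) t =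
      (R t * (deriv (deriv R) t * R t + 2 * (deriv R t) ^ 2)) * (y i * (‖y‖ ^ 3)⁻¹) := by
  have h := ((hR' t).hasDerivAt.mul ((hR t).hasDerivAt.pow 2)).mul_const (y i * (‖y‖ ^ 3)⁻¹)
  have e : (fun s => pulsatingVel R s y i) = fun s =>
      deriv R s * (R s) ^ 2 * (y i * (‖y‖ ^ 3)⁻¹) := by
    funext s
    simp [pulsatingVel]
    ring
  rw [e]
  erw [h.deriv]
  simp
  ring_nf
  simp

/-- The pair `(u,p)` with `u(t,x) = R'(t)R(t)²·x/‖x‖³` and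
`p(t,x) = R(t)(R''(t)R(t)+2R'(t)²)/‖x‖` solves the unsteady incompressible
Stokes equations on `ℝ³ ∖ {0}`: the componentwise spatial Laplacian of `u`
vanishes, `∂u/∂t + ∇ₓp = (1/Re) Δₓu`, and `divₓ u = 0`. -/
theorem pulsating_bubble_stokes (R : ℝ → ℝ)
    (hR : Differentiable ℝ R) (hR' : Differentiable ℝ (deriv R))
    (Re : ℝ) (hRe : 0 < Re)
    (x : EuclideanSpace ℝ (Fin 3)) (hx : x ≠ 0) (t : ℝ) :
    (∀ i : Fin 3,
      ∑ j : Fin 3,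
        fderiv ℝ (fun y => fderiv ℝ (fun z => pulsatingVel R t z i) y
          (EuclideanSpace.single j 1)) x (EuclideanSpace.single j 1) = 0) ∧
    (∀ i : Fin 3,
      deriv (fun s => pulsatingVel R s x i) t +
          fderiv ℝ (fun y => pulsatingPres R t y) x (EuclideanSpace.single i 1) =
        (1 / Re) *
          ∑ j : Fin 3,
            fderiv ℝ (fun y => fderiv ℝ (fun z => pulsatingVel R t z i) y
              (EuclideanSpace.single j 1)) x (EuclideanSpace.single j 1)) ∧
    (∑ i : Fin 3,
      fderiv ℝ (fun y => pulsatingVel R t y i) x (EuclideanSpace.single i 1) = 0) := by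
  have hn : ‖x‖ ≠ 0 := norm_ne_zero_iff.mpr hx
  have hs : ‖x‖ ^ 2 = x 0 ^ 2 + x 1 ^ 2 + x 2 ^ 2 := by
    rw [EuclideanSpace.real_norm_sq_eq, Fin.sum_univ_three]
  have h57 : (‖x‖ ^ 5)⁻¹ = (x 0 ^ 2 + x 1 ^ 2 + x 2 ^ 2) * (‖x‖ ^ 7)⁻¹ := by
    rw [← hs]
    field_simp
  have h35 : (‖x‖ ^ 3)⁻¹ = (x 0 ^ 2 + x 1 ^ 2 + x 2 ^ 2) * (‖x‖ ^ 5)⁻¹ := by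
    rw [← hs]
    field_simp
  have hL : ∀ i : Fin 3,
      ∑ j : Fin 3,
        fderiv ℝ (fun y => fderiv ℝ (fun z => pulsatingVel R t z i) y
          (EuclideanSpace.single j 1)) x (EuclideanSpace.single j 1) = 0 := by
    intro i
    simp only [pb_lap R t x hx, Fin.sum_univ_three, h57]
    fin_cases i <;> simp <;> ring
  refine ⟨hL, fun i => ?_, ?_⟩
  · rw [hL i, pb_time R hR hR', pb_pres R t x hx]
    ring
  · simp only [pb_vel R t x hx, Fin.sum_univ_three, h35]
    simp
    ring
end

section
/- Let R : ℝ → ℝ be twice differentiable, let R_B > 0 and Re > 0. Define the steady-domain velocity field u^f(x,t) = R'(t) R_B² · x/‖x‖³ and the pressure p^f(x,t) = R''(t) R_B² / ‖x‖ for x ∈ ℝ³ ∖ {0}. Then for every x ≠ 0 and every t, the pair (u^f, p^f) satisfies the unsteady incompressible Stokes equations: ∂u^f/∂t (x,t) + ∇_x p^f(x,t) = (1/Re) Δ_x u^f(x,t) and div_x u^f(x,t) = 0; moreover for ‖x‖ = R_B one has u^f(x,t) = R'(t) · x/‖x‖. -/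
/-- Steady-computational-bubble velocity field: `u^f(t,x) = R'(t) R_B² · x/‖x‖³`,
where the bubble oscillation with radius law `R(t)` is imposed on the fixed
sphere of radius `R_B`. -/
noncomputable def steadyVel (R : ℝ → ℝ) (RB t : ℝ)
    (x : EuclideanSpace ℝ (Fin 3)) : EuclideanSpace ℝ (Fin 3) :=
  (deriv R t * RB ^ 2 / ‖x‖ ^ 3) • x

/-- Steady-computational-bubble pressure field: `p^f(t,x) = R''(t) R_B² / ‖x‖`. -/
noncomputable def steadyPres (R : ℝ → ℝ) (RB t : ℝ)
    (x : EuclideanSpace ℝ (Fin 3)) : ℝ :=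
  deriv (deriv R) t * RB ^ 2 / ‖x‖


theorem hasFDerivAt_invNorm (x : EuclideanSpace ℝ (Fin 3)) (hx : x ≠ 0) :
    HasFDerivAt (fun y : EuclideanSpace ℝ (Fin 3) => ‖y‖⁻¹)
      ((-(‖x‖⁻¹ ^ 3)) • innerSL ℝ x) x := by
  have hn : ‖x‖ ≠ 0 := norm_ne_zero_iff.mpr hx
  have h1 : HasFDerivAt (fun y : EuclideanSpace ℝ (Fin 3) => ‖y‖ ^ 2)
      (2 • innerSL ℝ x) x := (hasStrictFDerivAt_norm_sq x).hasFDerivAt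
  have h2 := (h1.sqrt (pow_ne_zero 2 hn))
  have h3 : HasFDerivAt (fun y : EuclideanSpace ℝ (Fin 3) => ‖y‖)
      ((1 / (2 * √(‖x‖ ^ 2))) • (2 • innerSL ℝ x)) x := by
    simpa only [Real.sqrt_sq (norm_nonneg _)] using h2
  have h4 := (hasDerivAt_inv hn).comp_hasFDerivAt x h3
  refine h4.congr_fderiv ?_
  ext v
  simp only [Real.sqrt_sq (norm_nonneg _), smul_apply, smul_eq_mul,
    nsmul_eq_mul]
  field_simp
  norm_num

theorem hasFDerivAt_coord (x : EuclideanSpace ℝ (Fin 3)) (i : Fin 3) :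
    HasFDerivAt (fun y : EuclideanSpace ℝ (Fin 3) => y i)
      (EuclideanSpace.proj i : EuclideanSpace ℝ (Fin 3) →L[ℝ] ℝ) x :=
  (EuclideanSpace.proj i : EuclideanSpace ℝ (Fin 3) →L[ℝ] ℝ).hasFDerivAt

theorem inner_single_one (x : EuclideanSpace ℝ (Fin 3)) (j : Fin 3) :
    inner ℝ x (EuclideanSpace.single j 1) = x j := by
  simp [EuclideanSpace.inner_single_right]

theorem proj_single_one (i j : Fin 3) :
    (EuclideanSpace.proj i : EuclideanSpace ℝ (Fin 3) →L[ℝ] ℝ) (EuclideanSpace.single j 1) =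
      if i = j then 1 else 0 :=
  PiLp.single_apply 2 ℝ j 1 i

theorem steadyVel_apply (R : ℝ → ℝ) (RB t : ℝ) (x : EuclideanSpace ℝ (Fin 3)) (i : Fin 3) :
    steadyVel R RB t x i = (deriv R t * RB ^ 2) * (‖x‖⁻¹ ^ 3 * x i) := by
  simp [steadyVel, div_eq_mul_inv]
  ring

theorem fderiv_steadyVel (R : ℝ → ℝ) (RB t : ℝ) (x : EuclideanSpace ℝ (Fin 3)) (hx : x ≠ 0)
    (i j : Fin 3) :
    fderiv ℝ (fun y => steadyVel R RB t y i) x (EuclideanSpace.single j 1) =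
      (deriv R t * RB ^ 2) *
        (‖x‖⁻¹ ^ 3 * (if i = j then 1 else 0) - 3 * (‖x‖⁻¹ ^ 5 * (x i * x j))) := by
  simp only [steadyVel_apply]
  have h := ((((hasFDerivAt_invNorm x hx).pow 3).mul (hasFDerivAt_coord x i)).const_mul
    (deriv R t * RB ^ 2))
  have h' := congrArg (fun L => L (EuclideanSpace.single j 1)) h.fderiv
  refine h'.trans ?_
  by_cases hij : i = j
  all_goals
    simp only [smul_apply, add_apply, smul_eq_mul, nsmul_eq_mul, innerSL_apply_apply,
      inner_single_one, proj_single_one, hij, if_true, if_false]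
    push_cast
    ring

theorem fderiv_fderiv_steadyVel (R : ℝ → ℝ) (RB t : ℝ) (x : EuclideanSpace ℝ (Fin 3))
    (hx : x ≠ 0) (i j : Fin 3) :
    fderiv ℝ (fun y => fderiv ℝ (fun z => steadyVel R RB t z i) y
                (EuclideanSpace.single j 1)) x (EuclideanSpace.single j 1) =
      (deriv R t * RB ^ 2) *
        (-6 * ‖x‖⁻¹ ^ 5 * x j * (if i = j then 1 else 0) - 3 * ‖x‖⁻¹ ^ 5 * x i
          + 15 * ‖x‖⁻¹ ^ 7 * x i * x j ^ 2) := by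
  have he : (fun y => fderiv ℝ (fun z => steadyVel R RB t z i) y
                (EuclideanSpace.single j 1)) =ᶠ[nhds x] fun x => (deriv R t * RB ^ 2) *
        (‖x‖⁻¹ ^ 3 * (if i = j then 1 else 0) - 3 * (‖x‖⁻¹ ^ 5 * (x i * x j))) := by
    filter_upwards [isOpen_ne.mem_nhds hx] with y hy
    exact fderiv_steadyVel R RB t y hy i j
  rw [he.fderiv_eq]
  have hq := hasFDerivAt_invNorm x hx
  have h := ((((hq.pow 3).mul_const (if i = j then (1 : ℝ) else 0)).sub
    (((hq.pow 5).mul ((hasFDerivAt_coord x i).mul (hasFDerivAt_coord x j))).const_mul 3)).const_mul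
    (deriv R t * RB ^ 2))
  have h' := congrArg (fun L => L (EuclideanSpace.single j 1)) h.fderiv
  refine h'.trans ?_
  by_cases hij : i = j
  all_goals
    simp only [smul_apply, add_apply, sub_apply, Pi.mul_apply, smul_eq_mul, nsmul_eq_mul,
      innerSL_apply_apply,
      inner_single_one, proj_single_one, hij, if_true, if_false]
    push_cast
    ring

theorem sum_sq_inv (x : EuclideanSpace ℝ (Fin 3)) (hx : x ≠ 0) :
    ‖x‖⁻¹ ^ 2 * (x 0 ^ 2 + x 1 ^ 2 + x 2 ^ 2) = 1 := by
  have hn : ‖x‖ ≠ 0 := norm_ne_zero_iff.mpr hx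
  have h := EuclideanSpace.real_norm_sq_eq x
  rw [Fin.sum_univ_three] at h
  rw [← h]
  field_simp

/-- The pair `(u^f, p^f)` with `u^f(t,x) = R'(t)R_B²·x/‖x‖³` and
`p^f(t,x) = R''(t)R_B²/‖x‖` solves the unsteady incompressible Stokes equations
on `ℝ³ ∖ {0}` (with `Δₓu^f = 0` componentwise and `divₓ u^f = 0`), and on the
fixed sphere `‖x‖ = R_B` it equals the prescribed surface velocity
`R'(t)·x/‖x‖`. -/
theorem steady_computational_bubble_stokes (R : ℝ → ℝ)
    (hR : Differentiable ℝ R) (hR' : Differentiable ℝ (deriv R))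
    (RB Re : ℝ) (hRB : 0 < RB) (hRe : 0 < Re) (t : ℝ) :
    (∀ x : EuclideanSpace ℝ (Fin 3), x ≠ 0 →
      (∀ i : Fin 3,
        deriv (fun s => steadyVel R RB s x i) t +
            fderiv ℝ (fun y => steadyPres R RB t y) x (EuclideanSpace.single i 1) =
          (1 / Re) *
            ∑ j : Fin 3,
              fderiv ℝ (fun y => fderiv ℝ (fun z => steadyVel R RB t z i) y
                (EuclideanSpace.single j 1)) x (EuclideanSpace.single j 1)) ∧
      (∑ i : Fin 3,
        fderiv ℝ (fun y => steadyVel R RB t y i) x (EuclideanSpace.single i 1) = 0)) ∧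
    (∀ x : EuclideanSpace ℝ (Fin 3), ‖x‖ = RB →
      steadyVel R RB t x = (deriv R t / ‖x‖) • x) := by
  refine ⟨fun x hx => ⟨fun i => ?_, ?_⟩, fun x hx => ?_⟩
  · have hs := sum_sq_inv x hx
    have hlap : ∑ j : Fin 3,
              fderiv ℝ (fun y => fderiv ℝ (fun z => steadyVel R RB t z i) y
                (EuclideanSpace.single j 1)) x (EuclideanSpace.single j 1) = 0 := by
      simp only [fderiv_fderiv_steadyVel R RB t x hx, Fin.sum_univ_three]
      fin_cases i <;> simp only [Fin.zero_eta, Fin.mk_one, Fin.reduceFinMk, Fin.isValue,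
        Fin.reduceEq, if_true, if_false]
      · linear_combination (15 * (deriv R t * RB ^ 2) * ‖x‖⁻¹ ^ 5 * x 0) * hs
      · linear_combination (15 * (deriv R t * RB ^ 2) * ‖x‖⁻¹ ^ 5 * x 1) * hs
      · linear_combination (15 * (deriv R t * RB ^ 2) * ‖x‖⁻¹ ^ 5 * x 2) * hs
    rw [hlap, mul_zero]
    have h1 : deriv (fun s => steadyVel R RB s x i) t =
        deriv (deriv R) t * RB ^ 2 * (‖x‖⁻¹ ^ 3 * x i) := by
      simp only [steadyVel_apply]
      exact (((hR' t).hasDerivAt.mul_const _).mul_const _).deriv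
    have h2 : fderiv ℝ (fun y => steadyPres R RB t y) x (EuclideanSpace.single i 1) =
        -(deriv (deriv R) t * RB ^ 2 * (‖x‖⁻¹ ^ 3 * x i)) := by
      simp only [steadyPres, div_eq_mul_inv]
      have h := (hasFDerivAt_invNorm x hx).const_mul (deriv (deriv R) t * RB ^ 2)
      have h' := congrArg (fun L => L (EuclideanSpace.single i 1)) h.fderiv
      refine h'.trans ?_
      simp only [smul_apply, smul_eq_mul, innerSL_apply_apply, inner_single_one]
      ring
    rw [h1, h2]
    ring
  · have hs := sum_sq_inv x hx
    simp only [fderiv_steadyVel R RB t x hx, Fin.sum_univ_three, if_true]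
    linear_combination (-3 * (deriv R t * RB ^ 2) * ‖x‖⁻¹ ^ 3) * hs
  · have hn : ‖x‖ ≠ 0 := by rw [hx]; exact hRB.ne'
    rw [steadyVel, ← hx]
    congr 1
    field_simp
end
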